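/- Let μ₀ ≥ 1, let X'' ∈ ℝ^{m''×2} with m'' ≥ 1 and rows x''_1,…,x''_{m''} be μ₀-complex in the ℓ₀ sense, and let c_1,…,c_{m''} ∈ (0, 1/2) with E ≥ max_ℓ ln(1/c_ℓ). Define f₂(X''β) = ∑_{i=1}^{m''} h_{c_i}(x''_i·β). Then for every ℓ ∈ [m''] and every β ∈ ℝ²: h_{c_ℓ}(x''_ℓ·β) ≤ (3.5·E·(1+μ₀)/m'')·f₂(X''β). Consequently, m''·(3.5·E·(1+μ₀)/m'') = 3.5·E·(1+μ₀) bounds the sum over ℓ ∈ [m''] of these sensitivity upper bounds. -/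

import Mathlib

/-!
Every summand is below `ln(1/c) ≤ E`, and every summand with a nonpositive argument is at least
`ln(4/3) ≥ 2/7 = 1/3.5`. Complexity says that at least a `1/(1+μ₀)` fraction of the rows has a
negative product with `β ≠ 0`; for `β = 0` all products vanish. Hence in both cases
`f₂ ≥ (2/7)·m''/(1+μ₀)`, and dividing the upper bound `E` by this gives the claim.
-/

open Finset Matrix

/-- `h_c(z) = -ln(c + (1-c)/(1+e^{-z}))`. -/
noncomputable def hfun (c z : ℝ) : ℝ := -Real.log (c + (1 - c) / (1 + Real.exp (-z)))

/-- The rows `x` are `μ₀`-complex in the ℓ₀ sense. -/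
def Mu0Complex {ι : Type} [Fintype ι] {d : ℕ} (x : ι → Fin d → ℝ) (μ : ℝ) : Prop :=
  ∀ η : Fin d → ℝ, η ≠ 0 →
    ((Finset.univ.filter fun i => 0 ≤ x i ⬝ᵥ η).card : ℝ) ≤
      μ * ((Finset.univ.filter fun i => x i ⬝ᵥ η < 0).card : ℝ)

lemma two_sevenths_le_log : (2 / 7 : ℝ) ≤ Real.log (4 / 3) := by
  -- `2x/(x+2) ≤ log(1+x)` at `x = 1/3` has left side exactly `2/7`.
  have h := Real.le_log_one_add_of_nonneg (x := 1 / 3) (by norm_num)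
  norm_num at h
  exact h

lemma hfun_nonneg {c : ℝ} (hc : 0 < c ∧ c < 1 / 2) (z : ℝ) : 0 ≤ hfun c z := by
  obtain ⟨h0, h1⟩ := hc
  have he := Real.exp_pos (-z)
  have hle : (1 - c) / (1 + Real.exp (-z)) ≤ 1 - c :=
    div_le_self (by linarith) (by linarith)
  have hnn : 0 ≤ (1 - c) / (1 + Real.exp (-z)) := div_nonneg (by linarith) (by linarith)
  have := Real.log_nonpos (x := c + (1 - c) / (1 + Real.exp (-z))) (by linarith) (by linarith)
  unfold hfun
  linarith

lemma hfun_le_log {c : ℝ} (hc : 0 < c ∧ c < 1 / 2) (z : ℝ) : hfun c z ≤ Real.log (1 / c) := by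
  obtain ⟨h0, h1⟩ := hc
  have he := Real.exp_pos (-z)
  have hnn : 0 ≤ (1 - c) / (1 + Real.exp (-z)) := div_nonneg (by linarith) (by linarith)
  have := Real.log_le_log h0 (show c ≤ c + (1 - c) / (1 + Real.exp (-z)) by linarith)
  rw [one_div, Real.log_inv]
  unfold hfun
  linarith

lemma two_sevenths_le_hfun {c z : ℝ} (hc : 0 < c ∧ c < 1 / 2) (hz : z ≤ 0) :
    2 / 7 ≤ hfun c z := by
  obtain ⟨h0, h1⟩ := hc
  have he : 1 ≤ Real.exp (-z) := Real.one_le_exp (by linarith)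
  have hle : (1 - c) / (1 + Real.exp (-z)) ≤ (1 - c) / 2 :=
    div_le_div_of_nonneg_left (by linarith) (by norm_num) (by linarith)
  have hnn : 0 ≤ (1 - c) / (1 + Real.exp (-z)) := div_nonneg (by linarith) (by linarith)
  have hlog := Real.log_le_log (x := c + (1 - c) / (1 + Real.exp (-z))) (y := (4 / 3)⁻¹)
    (by linarith) (by norm_num; linarith)
  rw [Real.log_inv] at hlog
  have := two_sevenths_le_log
  unfold hfun
  linarith

/-- The rows with nonpositive product with `β` make up at least a `1/(1+μ)` fraction of all rows.
Unlike in the definition of complexity, `β = 0` is allowed, since zero products count here. -/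
lemma card_le_mul_card_nonpos {m d : ℕ} {μ : ℝ} (hμ : 0 ≤ μ) {x : Fin m → Fin d → ℝ}
    (hx : Mu0Complex x μ) (β : Fin d → ℝ) :
    (m : ℝ) ≤ (1 + μ) * ((univ.filter fun i => x i ⬝ᵥ β ≤ 0).card : ℝ) := by
  by_cases hβ : β = 0
  · subst hβ
    simp only [dotProduct_zero, le_refl, filter_true, card_univ, Fintype.card_fin]
    nlinarith [Nat.cast_nonneg (α := ℝ) m]
  · have h := hx β hβ
    have hsplit := card_filter_add_card_filter_not (s := (univ : Finset (Fin m)))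
      (fun i => x i ⬝ᵥ β < 0)
    simp only [not_lt, card_univ, Fintype.card_fin] at hsplit
    have hsplit' : ((univ.filter fun i => x i ⬝ᵥ β < 0).card : ℝ)
        + ((univ.filter fun i => 0 ≤ x i ⬝ᵥ β).card : ℝ) = m := by exact_mod_cast hsplit
    have hmono : ((univ.filter fun i => x i ⬝ᵥ β < 0).card : ℝ)
        ≤ ((univ.filter fun i => x i ⬝ᵥ β ≤ 0).card : ℝ) := by
      exact_mod_cast card_le_card (monotone_filter_right _ fun i _ hi => le_of_lt hi)
    nlinarith

/-- Sensitivity bound for the sigmoid summands: each satisfies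
`h_{c_ℓ}(x''_ℓ·β) ≤ (3.5·E·(1+μ₀)/m'')·f₂(X''β)`, and summing the upper bounds over
`ℓ ∈ [m'']` gives `3.5·E·(1+μ₀)`. -/
theorem stmt14 {m'' : ℕ} (hm : 1 ≤ m'') (μ0 : ℝ) (hμ : 1 ≤ μ0)
    (X'' : Fin m'' → Fin 2 → ℝ) (hX : Mu0Complex X'' μ0)
    (c : Fin m'' → ℝ) (hc : ∀ i, 0 < c i ∧ c i < 1 / 2)
    (E : ℝ) (hE : ∀ i, Real.log (1 / c i) ≤ E) :
    (∀ (ℓ : Fin m'') (β : Fin 2 → ℝ),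
        hfun (c ℓ) (X'' ℓ ⬝ᵥ β) ≤
          (3.5 * E * (1 + μ0) / (m'' : ℝ)) * ∑ i, hfun (c i) (X'' i ⬝ᵥ β)) ∧
      (m'' : ℝ) * (3.5 * E * (1 + μ0) / (m'' : ℝ)) = 3.5 * E * (1 + μ0) := by
  have hm' : (0 : ℝ) < m'' := by exact_mod_cast hm
  refine ⟨fun ℓ β => ?_, by field_simp⟩
  have hup : hfun (c ℓ) (X'' ℓ ⬝ᵥ β) ≤ E := (hfun_le_log (hc ℓ) _).trans (hE ℓ)
  have hE0 : 0 ≤ E := (hfun_nonneg (hc ℓ) _).trans hup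
  have hcard := card_le_mul_card_nonpos (by linarith) hX β
  have hsum : (2 / 7) * ((univ.filter fun i => X'' i ⬝ᵥ β ≤ 0).card : ℝ)
      ≤ ∑ i, hfun (c i) (X'' i ⬝ᵥ β) :=
    calc (2 / 7) * ((univ.filter fun i => X'' i ⬝ᵥ β ≤ 0).card : ℝ)
        = ∑ i ∈ univ.filter (fun i => X'' i ⬝ᵥ β ≤ 0), (2 / 7 : ℝ) := by
          rw [sum_const, nsmul_eq_mul, mul_comm]
      _ ≤ ∑ i ∈ univ.filter (fun i => X'' i ⬝ᵥ β ≤ 0), hfun (c i) (X'' i ⬝ᵥ β) :=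
          sum_le_sum fun i hi => two_sevenths_le_hfun (hc i) (mem_filter.mp hi).2
      _ ≤ ∑ i, hfun (c i) (X'' i ⬝ᵥ β) :=
          sum_le_sum_of_subset_of_nonneg (filter_subset _ _)
            fun i _ _ => hfun_nonneg (hc i) _
  have hf : (m'' : ℝ) ≤ 3.5 * (1 + μ0) * ∑ i, hfun (c i) (X'' i ⬝ᵥ β) := by
    have := mul_le_mul_of_nonneg_left hsum (show (0 : ℝ) ≤ 1 + μ0 by linarith)
    rw [show (3.5 : ℝ) = 7 / 2 by norm_num]
    linarith
  refine hup.trans ?_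
  rw [div_mul_eq_mul_div, le_div_iff₀ hm']
  calc E * m'' ≤ E * (3.5 * (1 + μ0) * ∑ i, hfun (c i) (X'' i ⬝ᵥ β)) :=
        mul_le_mul_of_nonneg_left hf hE0
    _ = 3.5 * E * (1 + μ0) * ∑ i, hfun (c i) (X'' i ⬝ᵥ β) := by ring
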